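/- Exact total-variation formula: with v_k(i) = Δ_k·c_k(i)/π_i and Δ_k² = (Σ_{i=0}^{N_w} c_k(i)²/π_i)^{−1}, Δ_k > 0, for every natural number m: ‖ρ_m(·|0) − π‖_V = (1/2)·Σ_{i=0}^{N_w} | π_i·Σ_{k=1}^{N_w} λ_k^m·v_k(i)·v_k(0) |, where ρ_m(i|0) = (T^m)_{i0} and λ_k = 1 − k(N+1−k)/(N1·N2). -/

import Mathlib

/-!
The chain is diagonalised explicitly. The generating function of the vector `c_k` is
`(1 - X)^k ₂F₁(k - N1, k - Nw; N2 - Nw + 1; X)`. Writing `θ = X d/dX`, the first-order equation of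
`(1 - X)^k` and the hypergeometric equation combine into a second-order equation for the product
(`genSer_ode`) whose coefficients are exactly the three-term relation `T c_k = λ_k c_k`
(`TBL_mul_cBL`); the truncation at `Nw` is harmless because the product has degree at most `Nw`.

Detailed balance (`TBL_balance`) makes `T` self-adjoint for the weight `1/π`, and the `λ_k` are
distinct for `k ≤ Nw ≤ N/2`, so the `c_k` form an orthogonal basis (`cBL_orthogonal`). Expanding the
point mass at `0` in it gives the law after `m` steps (`TBL_pow_apply`). Finally `c_0 = π/π_0` and
`Σ π_i = 1`, so the `k = 0` term of the expansion is `π` itself and cancels in the difference.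
-/

open Finset

noncomputable section

/-- Rising factorial (Pochhammer symbol) `a (a+1) ⋯ (a+m-1)` in `ℚ`. -/
def rfQ (a : ℚ) : ℕ → ℚ
  | 0 => 1
  | m + 1 => rfQ a m * (a + m)

/-- Components `c_k(i)` of the `k`-th right eigenvector of the BL transition matrix. -/
def cBL (N1 N2 Nw : ℕ) (k i : ℕ) : ℝ :=
  ((∑ n ∈ Finset.range (min k i + 1),
    (Nat.choose k n : ℚ) * (-1) ^ n
      * rfQ ((k : ℚ) - N1) (i - n) * rfQ ((k : ℚ) - Nw) (i - n)
      / (rfQ ((N2 : ℚ) - Nw + 1) (i - n) * (Nat.factorial (i - n) : ℚ)) : ℚ) : ℝ)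

/-- Up-transition probability `p_j` of the BL model. -/
def pBL (N1 N2 Nw : ℕ) (j : ℕ) : ℝ :=
  ((N1 : ℝ) - j) * ((Nw : ℝ) - j) / ((N1 : ℝ) * N2)

/-- Down-transition probability `q_j` of the BL model. -/
def qBL (N1 N2 Nb : ℕ) (j : ℕ) : ℝ :=
  (j : ℝ) * ((Nb : ℝ) - N1 + j) / ((N1 : ℝ) * N2)

/-- The Bernoulli–Laplace transition matrix `T`. -/
def TBL (N1 N2 Nw Nb : ℕ) : Matrix (Fin (Nw + 1)) (Fin (Nw + 1)) ℝ :=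
  fun i j =>
    if (i : ℕ) = (j : ℕ) + 1 then pBL N1 N2 Nw j
    else if (i : ℕ) + 1 = (j : ℕ) then qBL N1 N2 Nb j
    else if (i : ℕ) = (j : ℕ) then 1 - pBL N1 N2 Nw j - qBL N1 N2 Nb j
    else 0

/-- Eigenvalue `λ_k = 1 - k (N+1-k) / (N1 N2)`. -/
def lamBL (N1 N2 N : ℕ) (k : ℕ) : ℝ :=
  1 - (k : ℝ) * ((N : ℝ) + 1 - k) / ((N1 : ℝ) * N2)

/-- The hypergeometric stationary distribution `π_i = C(Nw,i) C(N-Nw,N1-i) / C(N,N1)`. -/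
def piBL (N1 Nw N : ℕ) (i : ℕ) : ℝ :=
  (Nat.choose Nw i : ℝ) * (Nat.choose (N - Nw) (N1 - i) : ℝ) / (Nat.choose N N1 : ℝ)

/-- The orthogonal measure `Δ_k² = (Σ_i c_k(i)²/π_i)⁻¹`. -/
def DeltaSqBL (N1 N2 Nw N : ℕ) (k : ℕ) : ℝ :=
  (∑ i ∈ Finset.range (Nw + 1), (cBL N1 N2 Nw k i) ^ 2 / piBL N1 Nw N i)⁻¹

/-- `Δ_k > 0`, the positive square root of `Δ_k²`. -/
def DeltaBL (N1 N2 Nw N : ℕ) (k : ℕ) : ℝ :=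
  Real.sqrt (DeltaSqBL N1 N2 Nw N k)

/-- Right eigenvectors of the symmetrized matrix: `v_k(i) = Δ_k c_k(i) / π_i`. -/
def vBL (N1 N2 Nw N : ℕ) (k i : ℕ) : ℝ :=
  DeltaBL N1 N2 Nw N k * cBL N1 N2 Nw k i / piBL N1 Nw N i

/-- Orthonormal eigenvectors of the symmetrized matrix: `w_k(i) = Δ_k c_k(i) / √(π_i)`. -/
def wBL (N1 N2 Nw N : ℕ) (k i : ℕ) : ℝ :=
  DeltaBL N1 N2 Nw N k * cBL N1 N2 Nw k i / Real.sqrt (piBL N1 Nw N i)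

/-! ### Generating function of the eigenvectors -/

open PowerSeries in
/-- The Euler operator `θ = X · d/dX` on power series. -/
def eulerOp (f : PowerSeries ℚ) : PowerSeries ℚ := X * d⁄dX ℚ f

lemma coeff_eulerOp (f : PowerSeries ℚ) (n : ℕ) :
    PowerSeries.coeff n (eulerOp f) = n * PowerSeries.coeff n f := by
  cases n with
  | zero => simp [eulerOp]
  | succ n =>
    simp only [eulerOp, PowerSeries.coeff_succ_X_mul, PowerSeries.coeff_derivative]
    push_cast; ring

lemma eulerOp_mul (f g : PowerSeries ℚ) :
    eulerOp (f * g) = eulerOp f * g + f * eulerOp g := by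
  simp only [eulerOp, Derivation.leibniz, smul_eq_mul]; ring

lemma eulerOp_add (f g : PowerSeries ℚ) : eulerOp (f + g) = eulerOp f + eulerOp g := by
  simp only [eulerOp, map_add]; ring

/-- The binomial series `(1 - X)^k`, given by its coefficients. -/
def binSer (k : ℕ) : PowerSeries ℚ := PowerSeries.mk fun n => (Nat.choose k n : ℚ) * (-1) ^ n

/-- The hypergeometric series `₂F₁(k - N1, k - Nw; d + 1; X)`; here
`d` stands for `N2 - Nw`. -/
def hypSer (N1 Nw d k : ℕ) : PowerSeries ℚ := PowerSeries.mk fun j =>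
  rfQ ((k : ℚ) - N1) j * rfQ ((k : ℚ) - Nw) j / (rfQ ((d : ℚ) + 1) j * (Nat.factorial j : ℚ))

/-- The generating function of `i ↦ c_k(i)`, namely `(1 - X)^k ₂F₁(k - N1, k - Nw; d + 1; X)`; here
`d` stands for `N2 - Nw`. -/
def genSer (N1 Nw d k : ℕ) : PowerSeries ℚ := binSer k * hypSer N1 Nw d k

lemma natCast_coeff_mul (a : ℕ) (f : PowerSeries ℚ) (n : ℕ) :
    PowerSeries.coeff n ((a : PowerSeries ℚ) * f) = a * PowerSeries.coeff n f := by
  rw [← map_natCast (PowerSeries.C (R := ℚ)) a, PowerSeries.coeff_C_mul]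

lemma rfQ_pos {a : ℚ} (ha : 0 < a) (j : ℕ) : 0 < rfQ a j := by
  induction j with
  | zero => simp [rfQ]
  | succ j ih => simp only [rfQ]; positivity

lemma rfQ_neg_eq_zero (s j : ℕ) (h : s < j) : rfQ (-(s : ℚ)) j = 0 := by
  induction j with
  | zero => omega
  | succ j ih =>
    simp only [rfQ]
    rcases Nat.lt_succ_iff_lt_or_eq.mp h with h | h
    · rw [ih h, zero_mul]
    · subst h; simp

lemma binSer_ode (k : ℕ) :
    (1 - PowerSeries.X) * eulerOp (binSer k) = -((k : PowerSeries ℚ) * (PowerSeries.X * binSer k)) := by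
  ext n
  rw [sub_mul, one_mul, map_sub, map_neg, natCast_coeff_mul, coeff_eulerOp]
  cases n with
  | zero => simp
  | succ n =>
    simp only [PowerSeries.coeff_succ_X_mul, coeff_eulerOp, binSer, PowerSeries.coeff_mk]
    have h : (Nat.choose k (n + 1) : ℚ) * (n + 1) = Nat.choose k n * (k - n) := by
      rcases le_or_gt n k with hnk | hnk
      · have := Nat.choose_succ_right_eq k n
        have h2 : ((k - n : ℕ) : ℚ) = k - n := by push_cast [hnk]; ring
        rw [← h2]; exact_mod_cast this
      · simp [Nat.choose_eq_zero_of_lt hnk, Nat.choose_eq_zero_of_lt (Nat.lt_succ_of_lt hnk)]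
    push_cast
    linear_combination (-(-1) ^ n) * h

/-- The hypergeometric equation `θ(θ + d) F = X (θ + k - N1)(θ + k - Nw) F`. -/
lemma hypSer_ode (N1 Nw d k : ℕ) :
    eulerOp (eulerOp (hypSer N1 Nw d k)) + (d : PowerSeries ℚ) * eulerOp (hypSer N1 Nw d k)
      = PowerSeries.X * (eulerOp (eulerOp (hypSer N1 Nw d k))
        + ((k : PowerSeries ℚ) * eulerOp (hypSer N1 Nw d k)
          - (N1 : PowerSeries ℚ) * eulerOp (hypSer N1 Nw d k))
        + ((k : PowerSeries ℚ) * eulerOp (hypSer N1 Nw d k)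
          - (Nw : PowerSeries ℚ) * eulerOp (hypSer N1 Nw d k))
        + ((k : PowerSeries ℚ) * ((k : PowerSeries ℚ) * hypSer N1 Nw d k
            - (Nw : PowerSeries ℚ) * hypSer N1 Nw d k)
          - (N1 : PowerSeries ℚ) * ((k : PowerSeries ℚ) * hypSer N1 Nw d k
            - (Nw : PowerSeries ℚ) * hypSer N1 Nw d k))) := by
  ext n
  cases n with
  | zero => simp [eulerOp]
  | succ n =>
    simp only [PowerSeries.coeff_succ_X_mul, map_add, map_sub, coeff_eulerOp, natCast_coeff_mul,
      hypSer, PowerSeries.coeff_mk, rfQ, Nat.factorial_succ]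
    have h1 : rfQ ((d : ℚ) + 1) n ≠ 0 := (rfQ_pos (by positivity) n).ne'
    have h2 : (Nat.factorial n : ℚ) ≠ 0 := by positivity
    have h3 : (d : ℚ) + 1 + n ≠ 0 := by positivity
    have h4 : (n : ℚ) + 1 ≠ 0 := by positivity
    push_cast
    field_simp
    ring

/-- The generating function `G = P F` inherits from the equations of its two factors a second order
equation whose coefficients are the three-term recurrence of the transition matrix. -/
lemma genSer_ode (N1 Nw d k : ℕ) :
    eulerOp (eulerOp (genSer N1 Nw d k)) + (d : PowerSeries ℚ) * eulerOp (genSer N1 Nw d k)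
      + PowerSeries.X * (PowerSeries.X * (eulerOp (eulerOp (genSer N1 Nw d k))
          - (N1 : PowerSeries ℚ) * eulerOp (genSer N1 Nw d k) - (Nw : PowerSeries ℚ) * eulerOp (genSer N1 Nw d k)
          + (N1 : PowerSeries ℚ) * ((Nw : PowerSeries ℚ) * genSer N1 Nw d k)))
      = PowerSeries.X * (eulerOp (eulerOp (genSer N1 Nw d k)) + (d : PowerSeries ℚ) * eulerOp (genSer N1 Nw d k)
        + (eulerOp (eulerOp (genSer N1 Nw d k))
          - (N1 : PowerSeries ℚ) * eulerOp (genSer N1 Nw d k) - (Nw : PowerSeries ℚ) * eulerOp (genSer N1 Nw d k)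
          + (N1 : PowerSeries ℚ) * ((Nw : PowerSeries ℚ) * genSer N1 Nw d k))
        - ((k : PowerSeries ℚ) * ((N1 : PowerSeries ℚ) * genSer N1 Nw d k) + (k : PowerSeries ℚ) * ((d : PowerSeries ℚ) * genSer N1 Nw d k) + (k : PowerSeries ℚ) * ((Nw : PowerSeries ℚ) * genSer N1 Nw d k)
           + (k : PowerSeries ℚ) * genSer N1 Nw d k - (k : PowerSeries ℚ) * ((k : PowerSeries ℚ) * genSer N1 Nw d k))) := by
  have hP := binSer_ode k
  have hF := hypSer_ode N1 Nw d k
  have hP2 : (1 - PowerSeries.X) * eulerOp (eulerOp (binSer k))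
      = PowerSeries.X * eulerOp (binSer k) - (k : PowerSeries ℚ) * (PowerSeries.X * binSer k)
        - (k : PowerSeries ℚ) * (PowerSeries.X * eulerOp (binSer k)) := by
    have hX : eulerOp (PowerSeries.X) = PowerSeries.X := by
      simp [eulerOp]
    have hk : eulerOp (k : PowerSeries ℚ) = 0 := by
      simp [eulerOp]
    have h1 : eulerOp (1 - PowerSeries.X) = -PowerSeries.X := by
      simp [eulerOp]
    have hn : eulerOp (-((k : PowerSeries ℚ) * (PowerSeries.X * binSer k)))
        = -eulerOp ((k : PowerSeries ℚ) * (PowerSeries.X * binSer k)) := by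
      simp only [eulerOp, map_neg]; ring
    have := congrArg eulerOp hP
    rw [hn, eulerOp_mul, eulerOp_mul, eulerOp_mul, hX, hk, h1] at this
    linear_combination this
  simp only [genSer, eulerOp_mul, eulerOp_add]
  generalize eulerOp (eulerOp (binSer k)) = P2 at *
  generalize eulerOp (binSer k) = P1 at *
  generalize binSer k = P at *
  generalize eulerOp (eulerOp (hypSer N1 Nw d k)) = F2 at *
  generalize eulerOp (hypSer N1 Nw d k) = F1 at *
  generalize hypSer N1 Nw d k = F at *
  linear_combination (1 - PowerSeries.X) * P * hF + (1 - PowerSeries.X) * F * hP2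
    + (2 * (1 - PowerSeries.X) * F1
      + (PowerSeries.X * (1 - (k : PowerSeries ℚ)) + (d : PowerSeries ℚ)
        + PowerSeries.X * ((N1 : PowerSeries ℚ) + (Nw : PowerSeries ℚ))) * F) * hP

lemma cBL_eq (N1 N2 Nw k i : ℕ) (h : Nw ≤ N2) :
    cBL N1 N2 Nw k i = (PowerSeries.coeff i (genSer N1 Nw (N2 - Nw) k) : ℚ) := by
  have hd : ((N2 - Nw : ℕ) : ℚ) = (N2 : ℚ) - Nw := by push_cast [h]; ring
  unfold cBL genSer binSer hypSer
  congr 1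
  rw [PowerSeries.coeff_mul, Finset.Nat.sum_antidiagonal_eq_sum_range_succ_mk]
  simp only [PowerSeries.coeff_mk, hd]
  refine (Finset.sum_congr rfl fun n _ => ?_).trans
    (Finset.sum_subset (s₁ := Finset.range (min k i + 1)) ?_ ?_)
  · ring
  · intro n; simp only [Finset.mem_range]; omega
  · intro n hn hn'
    simp only [Finset.mem_range] at hn hn'
    rw [Nat.choose_eq_zero_of_lt (by omega)]; simp

lemma cBL_zero (N1 N2 Nw k : ℕ) : cBL N1 N2 Nw k 0 = 1 := by
  simp [cBL, rfQ]

/-- `c_k` has no component beyond `Nw`: its generating function has degree at most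
`k + (Nw - k)`. -/
lemma cBL_top (N1 N2 Nw k : ℕ) (hk : k ≤ Nw) : cBL N1 N2 Nw k (Nw + 1) = 0 := by
  unfold cBL
  rw [Finset.sum_eq_zero, Rat.cast_zero]
  intro n hn
  simp only [Finset.mem_range] at hn
  have : ((k : ℚ) - Nw) = -((Nw - k : ℕ) : ℚ) := by push_cast [hk]; ring
  rw [this, rfQ_neg_eq_zero _ (Nw + 1 - n) (by omega)]
  simp

lemma cBL_rec_zero (N1 N2 Nw k : ℕ) (h : Nw ≤ N2) :
    ((N2 : ℝ) - Nw + 1) * cBL N1 N2 Nw k 1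
      = ((N1 : ℝ) * Nw - k * ((N1 : ℝ) + N2 + 1 - k)) * cBL N1 N2 Nw k 0 := by
  have hd : ((N2 - Nw : ℕ) : ℝ) = (N2 : ℝ) - Nw := by push_cast [h]; ring
  have := congrArg (fun f => ((PowerSeries.coeff (0 + 1) f : ℚ) : ℝ)) (genSer_ode N1 Nw (N2 - Nw) k)
  simp only [PowerSeries.coeff_succ_X_mul, map_add, map_sub,
    coeff_eulerOp, natCast_coeff_mul, PowerSeries.coeff_zero_X_mul] at this
  rw [cBL_eq _ _ _ _ _ h, cBL_eq _ _ _ _ _ h]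
  simp only [zero_add] at this
  push_cast [hd] at this
  linear_combination this

lemma cBL_rec_succ (N1 N2 Nw k i : ℕ) (h : Nw ≤ N2) :
    ((i : ℝ) + 2) * ((N2 : ℝ) - Nw + i + 2) * cBL N1 N2 Nw k (i + 2)
      + ((N1 : ℝ) - i) * ((Nw : ℝ) - i) * cBL N1 N2 Nw k i
      = (((N1 : ℝ) - (i + 1)) * ((Nw : ℝ) - (i + 1)) + (i + 1) * ((N2 : ℝ) - Nw + (i + 1))
          - k * ((N1 : ℝ) + N2 + 1 - k)) * cBL N1 N2 Nw k (i + 1) := by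
  have hd : ((N2 - Nw : ℕ) : ℝ) = (N2 : ℝ) - Nw := by push_cast [h]; ring
  have := congrArg (fun f => ((PowerSeries.coeff (i + 1 + 1) f : ℚ) : ℝ))
    (genSer_ode N1 Nw (N2 - Nw) k)
  simp only [PowerSeries.coeff_succ_X_mul, map_add, map_sub,
    coeff_eulerOp, natCast_coeff_mul] at this
  rw [cBL_eq _ _ _ _ _ h, cBL_eq _ _ _ _ _ h, cBL_eq _ _ _ _ _ h]
  push_cast [hd] at this
  linear_combination this

/-! ### Eigenvalue equation -/

/-- `T c_k = λ_k c_k`. -/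
lemma TBL_mul_cBL (N1 N2 Nw Nb : ℕ) (hN1 : 1 ≤ N1) (hN2 : 1 ≤ N2)
    (hwb : Nw + Nb = N1 + N2) (hw2 : Nw ≤ N2) (k : ℕ) (hk : k ≤ Nw) (i : Fin (Nw + 1)) :
    ∑ j : Fin (Nw + 1), TBL N1 N2 Nw Nb i j * cBL N1 N2 Nw k j
      = lamBL N1 N2 (N1 + N2) k * cBL N1 N2 Nw k i := by
  obtain ⟨i, hi⟩ := i
  have hNb : (Nb : ℝ) = N1 + N2 - Nw := by
    have : (Nw : ℝ) + Nb = N1 + N2 := by exact_mod_cast hwb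
    linarith
  have hn1 : (N1 : ℝ) ≠ 0 := by positivity
  have hn2 : (N2 : ℝ) ≠ 0 := by positivity
  have hsplit : ∀ j : Fin (Nw + 1), TBL N1 N2 Nw Nb ⟨i, hi⟩ j * cBL N1 N2 Nw k j
      = (if i = (j : ℕ) + 1 then pBL N1 N2 Nw j * cBL N1 N2 Nw k j else 0)
        + (if i + 1 = (j : ℕ) then qBL N1 N2 Nb j * cBL N1 N2 Nw k j else 0)
        + (if i = (j : ℕ) then
            (1 - pBL N1 N2 Nw j - qBL N1 N2 Nb j) * cBL N1 N2 Nw k j else 0) := by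
    intro j
    unfold TBL
    dsimp only
    split_ifs <;> first | omega | simp
  have hq : (∑ j ∈ Finset.range (Nw + 1),
      if i + 1 = j then qBL N1 N2 Nb j * cBL N1 N2 Nw k j else 0)
      = qBL N1 N2 Nb (i + 1) * cBL N1 N2 Nw k (i + 1) := by
    rw [Finset.sum_ite_eq]
    split_ifs with h
    · rfl
    · have : i = Nw := by simp only [Finset.mem_range] at h; omega
      rw [this, cBL_top _ _ _ _ hk, mul_zero]
  rw [Finset.sum_congr rfl fun j _ => hsplit j,
    Fin.sum_univ_eq_sum_range (fun j => (if i = j + 1 then pBL N1 N2 Nw j * cBL N1 N2 Nw k j else 0)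
        + (if i + 1 = j then qBL N1 N2 Nb j * cBL N1 N2 Nw k j else 0)
        + (if i = j then
            (1 - pBL N1 N2 Nw j - qBL N1 N2 Nb j) * cBL N1 N2 Nw k j else 0)) (Nw + 1),
    Finset.sum_add_distrib, Finset.sum_add_distrib, hq, Finset.sum_ite_eq,
    if_pos (Finset.mem_range.mpr hi)]
  cases i with
  | zero =>
    have := cBL_rec_zero N1 N2 Nw k hw2
    simp only [(Nat.succ_ne_zero _).symm, if_false, Finset.sum_const_zero, zero_add, pBL, qBL,
      lamBL, hNb]
    push_cast
    field_simp
    linear_combination this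
  | succ i =>
    have := cBL_rec_succ N1 N2 Nw k i hw2
    simp only [Nat.add_right_cancel_iff, Finset.sum_ite_eq]
    rw [if_pos (Finset.mem_range.mpr (by omega))]
    simp only [pBL, qBL, lamBL, hNb]
    push_cast
    field_simp
    linear_combination this

/-! ### The stationary distribution and reversibility -/

lemma piBL_pos (N1 N2 Nw i : ℕ) (hw2 : Nw ≤ N2) (hi : i ≤ Nw) :
    0 < piBL N1 Nw (N1 + N2) i := by
  have h1 := Nat.choose_pos hi
  have h2 : 0 < Nat.choose (N1 + N2 - Nw) (N1 - i) := Nat.choose_pos (by omega)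
  have h3 : 0 < Nat.choose (N1 + N2) N1 := Nat.choose_pos (by omega)
  unfold piBL
  positivity

/-- The hypergeometric weights sum to one, by the Chu–Vandermonde identity. -/
lemma piBL_sum (N1 N2 Nw : ℕ) (hw1 : Nw ≤ N1) (hw2 : Nw ≤ N2) :
    ∑ i ∈ Finset.range (Nw + 1), piBL N1 Nw (N1 + N2) i = 1 := by
  have h3 : 0 < Nat.choose (N1 + N2) N1 := Nat.choose_pos (by omega)
  have hv := Nat.add_choose_eq Nw (N1 + N2 - Nw) N1
  rw [show Nw + (N1 + N2 - Nw) = N1 + N2 by omega,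
    Finset.Nat.sum_antidiagonal_eq_sum_range_succ_mk] at hv
  rw [← Finset.sum_subset (s₁ := Finset.range (Nw + 1))] at hv
  · unfold piBL
    rw [← Finset.sum_div, div_eq_one_iff_eq (by positivity)]
    rw [hv]; push_cast; rfl
  · intro n; simp only [Finset.mem_range]; omega
  · intro n _ hn'
    simp only [Finset.mem_range] at hn'
    rw [Nat.choose_eq_zero_of_lt (by omega)]; simp

/-- Detailed balance across the edge `{j, j + 1}`, cleared of denominators. -/
lemma piBL_step (N1 N2 Nw j : ℕ) (hw1 : Nw ≤ N1) (hw2 : Nw ≤ N2) (hj : j < Nw) :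
    ((N1 : ℝ) - j) * ((Nw : ℝ) - j) * piBL N1 Nw (N1 + N2) j
      = ((j : ℝ) + 1) * ((N2 : ℝ) - Nw + (j + 1)) * piBL N1 Nw (N1 + N2) (j + 1) := by
  have h1 := Nat.choose_succ_right_eq Nw j
  have h2 := Nat.choose_succ_right_eq (N1 + N2 - Nw) (N1 - (j + 1))
  rw [show N1 - (j + 1) + 1 = N1 - j by omega,
    show N1 + N2 - Nw - (N1 - (j + 1)) = N2 - Nw + (j + 1) by omega] at h2
  have h1' : (Nat.choose Nw (j + 1) : ℝ) * (j + 1) = Nat.choose Nw j * ((Nw : ℝ) - j) := by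
    rw [← Nat.cast_sub (by omega)]; exact_mod_cast h1
  have h2' : (Nat.choose (N1 + N2 - Nw) (N1 - j) : ℝ) * ((N1 : ℝ) - j)
      = Nat.choose (N1 + N2 - Nw) (N1 - (j + 1)) * ((N2 : ℝ) - Nw + (j + 1)) := by
    rw [← Nat.cast_sub (by omega), ← Nat.cast_sub (by omega)]; exact_mod_cast h2
  unfold piBL
  rw [mul_div_assoc', mul_div_assoc']
  congr 1
  linear_combination (Nat.choose Nw j : ℝ) * ((Nw : ℝ) - j) * h2'
    - (Nat.choose (N1 + N2 - Nw) (N1 - (j + 1)) : ℝ) * ((N2 : ℝ) - Nw + (j + 1)) * h1'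

/-- Reversibility of the chain with respect to the hypergeometric distribution. -/
lemma TBL_balance (N1 N2 Nw Nb : ℕ) (hwb : Nw + Nb = N1 + N2) (hw1 : Nw ≤ N1) (hw2 : Nw ≤ N2)
    (i j : Fin (Nw + 1)) :
    TBL N1 N2 Nw Nb i j * piBL N1 Nw (N1 + N2) j
      = TBL N1 N2 Nw Nb j i * piBL N1 Nw (N1 + N2) i := by
  have hNb : (Nb : ℝ) = N1 + N2 - Nw := by
    have : (Nw : ℝ) + Nb = N1 + N2 := by exact_mod_cast hwb
    linarith
  have key : ∀ a : ℕ, a < Nw → pBL N1 N2 Nw a * piBL N1 Nw (N1 + N2) a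
      = qBL N1 N2 Nb (a + 1) * piBL N1 Nw (N1 + N2) (a + 1) := by
    intro a ha
    have := piBL_step N1 N2 Nw a hw1 hw2 ha
    simp only [pBL, qBL, hNb]
    rw [div_mul_eq_mul_div, div_mul_eq_mul_div, this]
    push_cast
    ring
  obtain ⟨i, hi⟩ := i
  obtain ⟨j, hj⟩ := j
  unfold TBL
  dsimp only
  rcases lt_trichotomy i j with h | h | h
  · by_cases h1 : j = i + 1
    · subst h1
      rw [if_neg (by omega), if_pos rfl, if_pos rfl, key i (by omega)]
    · rw [if_neg (by omega), if_neg (by omega), if_neg (by omega), if_neg (by omega),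
        if_neg (by omega), if_neg (by omega)]
      simp
  · subst h; rfl
  · by_cases h1 : i = j + 1
    · subst h1
      rw [if_pos rfl, if_neg (by omega), if_pos rfl, key j (by omega)]
    · rw [if_neg (by omega), if_neg (by omega), if_neg (by omega), if_neg (by omega),
        if_neg (by omega), if_neg (by omega)]
      simp

/-- The zeroth eigenvector is proportional to the stationary distribution. -/
lemma piBL_eq_cBL (N1 N2 Nw i : ℕ) (hw1 : Nw ≤ N1) (hw2 : Nw ≤ N2) (hi : i ≤ Nw) :
    piBL N1 Nw (N1 + N2) i = piBL N1 Nw (N1 + N2) 0 * cBL N1 N2 Nw 0 i := by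
  have hc : ∀ i, cBL N1 N2 Nw 0 i = ((rfQ (-(N1 : ℚ)) i * rfQ (-(Nw : ℚ)) i
      / (rfQ ((N2 : ℚ) - Nw + 1) i * (Nat.factorial i : ℚ)) : ℚ) : ℝ) := by
    intro i; simp [cBL]
  induction i with
  | zero => rw [cBL_zero, mul_one]
  | succ j ih =>
    have hs := piBL_step N1 N2 Nw j hw1 hw2 (by omega)
    rw [ih (by omega)] at hs
    have hd : (0 : ℝ) ≤ (N2 : ℝ) - Nw := by
      have : (Nw : ℝ) ≤ N2 := by exact_mod_cast hw2
      linarith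
    have hdQ : (0 : ℚ) ≤ (N2 : ℚ) - Nw := by
      have : (Nw : ℚ) ≤ N2 := by exact_mod_cast hw2
      linarith
    have hne : ((j : ℝ) + 1) * ((N2 : ℝ) - Nw + (j + 1)) ≠ 0 := by positivity
    have hrec : ((j : ℝ) + 1) * ((N2 : ℝ) - Nw + (j + 1)) * cBL N1 N2 Nw 0 (j + 1)
        = ((N1 : ℝ) - j) * ((Nw : ℝ) - j) * cBL N1 N2 Nw 0 j := by
      rw [hc, hc]
      have h1 : rfQ ((N2 : ℚ) - Nw + 1) j ≠ 0 := (rfQ_pos (by positivity) j).ne'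
      have h2 : (Nat.factorial j : ℚ) ≠ 0 := by positivity
      have h3 : (N2 : ℚ) - Nw + 1 + j ≠ 0 := by positivity
      have h4 : (j : ℚ) + 1 ≠ 0 := by positivity
      have : ((j : ℚ) + 1) * ((N2 : ℚ) - Nw + (j + 1)) * (rfQ (-(N1 : ℚ)) (j + 1)
          * rfQ (-(Nw : ℚ)) (j + 1)
          / (rfQ ((N2 : ℚ) - Nw + 1) (j + 1) * (Nat.factorial (j + 1) : ℚ)))
        = ((N1 : ℚ) - j) * ((Nw : ℚ) - j) * (rfQ (-(N1 : ℚ)) j * rfQ (-(Nw : ℚ)) j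
          / (rfQ ((N2 : ℚ) - Nw + 1) j * (Nat.factorial j : ℚ))) := by
        simp only [rfQ, Nat.factorial_succ]
        push_cast
        field_simp
        ring
      exact_mod_cast this
    apply mul_left_cancel₀ hne
    linear_combination -hs - piBL N1 Nw (N1 + N2) 0 * hrec

/-! ### Orthogonality and spectral decomposition -/

lemma lamBL_injOn (N1 N2 Nw k l : ℕ) (hN1 : 1 ≤ N1) (hN2 : 1 ≤ N2) (hw1 : Nw ≤ N1) (hw2 : Nw ≤ N2)
    (hk : k ≤ Nw) (hl : l ≤ Nw) (h : lamBL N1 N2 (N1 + N2) k = lamBL N1 N2 (N1 + N2) l) :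
    k = l := by
  have hn1 : (N1 : ℝ) ≠ 0 := by positivity
  have hn2 : (N2 : ℝ) ≠ 0 := by positivity
  unfold lamBL at h
  field_simp at h
  push_cast at h
  have hprod : ((k : ℝ) - l) * ((N1 : ℝ) + N2 + 1 - k - l) = 0 := by linear_combination -h
  have hle : (k : ℝ) + l ≤ N1 + N2 := by exact_mod_cast (by omega : k + l ≤ N1 + N2)
  rcases mul_eq_zero.mp hprod with h | h
  · exact_mod_cast sub_eq_zero.mp h
  · linarith

/-- Eigenvectors of distinct eigenvalues are orthogonal for the weight `1/π`, because `T` is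
self-adjoint for that weight. -/
lemma cBL_orthogonal (N1 N2 Nw Nb : ℕ) (hN1 : 1 ≤ N1) (hN2 : 1 ≤ N2)
    (hwb : Nw + Nb = N1 + N2) (hw1 : Nw ≤ N1) (hw2 : Nw ≤ N2) (k l : ℕ) (hk : k ≤ Nw) (hl : l ≤ Nw)
    (hkl : k ≠ l) :
    ∑ i : Fin (Nw + 1), cBL N1 N2 Nw k i * cBL N1 N2 Nw l i / piBL N1 Nw (N1 + N2) i = 0 := by
  set S := ∑ i : Fin (Nw + 1), cBL N1 N2 Nw k i * cBL N1 N2 Nw l i / piBL N1 Nw (N1 + N2) i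
    with hS
  have hpi : ∀ i : Fin (Nw + 1), piBL N1 Nw (N1 + N2) i ≠ 0 := fun i =>
    (piBL_pos N1 N2 Nw i hw2 (Nat.lt_succ_iff.mp i.2)).ne'
  have hform : ∀ a b : ℕ, b ≤ Nw → lamBL N1 N2 (N1 + N2) b
      * ∑ i : Fin (Nw + 1), cBL N1 N2 Nw a i * cBL N1 N2 Nw b i / piBL N1 Nw (N1 + N2) i
      = ∑ i : Fin (Nw + 1), ∑ j : Fin (Nw + 1), cBL N1 N2 Nw a i
          * (TBL N1 N2 Nw Nb i j / piBL N1 Nw (N1 + N2) i) * cBL N1 N2 Nw b j := by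
    intro a b hb
    rw [Finset.mul_sum]
    refine Finset.sum_congr rfl fun i _ => ?_
    have := TBL_mul_cBL N1 N2 Nw Nb hN1 hN2 hwb hw2 b hb i
    rw [show lamBL N1 N2 (N1 + N2) b
        * (cBL N1 N2 Nw a i * cBL N1 N2 Nw b i / piBL N1 Nw (N1 + N2) i)
        = cBL N1 N2 Nw a i / piBL N1 Nw (N1 + N2) i
          * (lamBL N1 N2 (N1 + N2) b * cBL N1 N2 Nw b i) by ring, ← this, Finset.mul_sum]
    exact Finset.sum_congr rfl fun j _ => by ring
  have h1 := hform k l hl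
  have h2 := hform l k hk
  rw [Finset.sum_comm] at h2
  have hS' : ∑ i : Fin (Nw + 1), cBL N1 N2 Nw l i * cBL N1 N2 Nw k i / piBL N1 Nw (N1 + N2) i
      = S := Finset.sum_congr rfl fun i _ => by ring
  rw [hS'] at h2
  have heq : lamBL N1 N2 (N1 + N2) l * S = lamBL N1 N2 (N1 + N2) k * S := by
    rw [h1, h2]
    refine Finset.sum_congr rfl fun i _ => Finset.sum_congr rfl fun j _ => ?_
    have hb := TBL_balance N1 N2 Nw Nb hwb hw1 hw2 i j
    have : TBL N1 N2 Nw Nb i j / piBL N1 Nw (N1 + N2) i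
        = TBL N1 N2 Nw Nb j i / piBL N1 Nw (N1 + N2) j := by
      rw [div_eq_div_iff (hpi i) (hpi j), hb]
    rw [this]; ring
  by_contra hne
  exact hkl (lamBL_injOn N1 N2 Nw k l hN1 hN2 hw1 hw2 hk hl (mul_right_cancel₀ hne heq).symm)

lemma normSq_pos (N1 N2 Nw k : ℕ) (hw2 : Nw ≤ N2) :
    0 < ∑ i ∈ Finset.range (Nw + 1), (cBL N1 N2 Nw k i) ^ 2 / piBL N1 Nw (N1 + N2) i := by
  have hpi : ∀ i ∈ Finset.range (Nw + 1), 0 < piBL N1 Nw (N1 + N2) i := fun i hi =>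
    piBL_pos N1 N2 Nw i hw2 (Nat.lt_succ_iff.mp (Finset.mem_range.mp hi))
  refine Finset.sum_pos' (fun i hi => ?_) ⟨0, by simp, ?_⟩
  · have := hpi i hi; positivity
  · have := hpi 0 (by simp)
    rw [cBL_zero]; positivity

/-- Spectral decomposition of the `m`-step law started at `0`. With `U = (c_k(i))_{i,k}` and
`V = (Δ_k² c_k(j)/π_j)_{k,j}`, orthogonality says `V U = 1`, so `U V = 1` and
`T^m = T^m U V = U Λ^m V`. -/
lemma TBL_pow_apply (N1 N2 Nw Nb : ℕ) (hN1 : 1 ≤ N1) (hN2 : 1 ≤ N2)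
    (hwb : Nw + Nb = N1 + N2) (hw1 : Nw ≤ N1) (hw2 : Nw ≤ N2) (m : ℕ) (i : Fin (Nw + 1)) :
    ((TBL N1 N2 Nw Nb) ^ m) i 0 = ∑ k ∈ Finset.range (Nw + 1), cBL N1 N2 Nw k i
      * (lamBL N1 N2 (N1 + N2) k) ^ m * DeltaSqBL N1 N2 Nw (N1 + N2) k
        / piBL N1 Nw (N1 + N2) 0 := by
  let U : Matrix (Fin (Nw + 1)) (Fin (Nw + 1)) ℝ := fun i k => cBL N1 N2 Nw k i
  let V : Matrix (Fin (Nw + 1)) (Fin (Nw + 1)) ℝ := fun k j =>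
    DeltaSqBL N1 N2 Nw (N1 + N2) k * cBL N1 N2 Nw k j / piBL N1 Nw (N1 + N2) j
  let L : Matrix (Fin (Nw + 1)) (Fin (Nw + 1)) ℝ :=
    Matrix.diagonal fun k => lamBL N1 N2 (N1 + N2) k
  have hVU : V * U = 1 := by
    ext k l
    have hentry : (V * U) k l = DeltaSqBL N1 N2 Nw (N1 + N2) k
        * ∑ i : Fin (Nw + 1), cBL N1 N2 Nw k i * cBL N1 N2 Nw l i / piBL N1 Nw (N1 + N2) i := by
      rw [Matrix.mul_apply, Finset.mul_sum]
      exact Finset.sum_congr rfl fun i _ => by simp only [U, V]; ring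
    rw [hentry]
    by_cases hkl : k = l
    · subst hkl
      rw [Matrix.one_apply_eq, DeltaSqBL, Fin.sum_univ_eq_sum_range
        (fun i => cBL N1 N2 Nw k i * cBL N1 N2 Nw k i / piBL N1 Nw (N1 + N2) i) (Nw + 1)]
      simp only [← pow_two]
      exact inv_mul_cancel₀ (normSq_pos N1 N2 Nw k hw2).ne'
    · rw [Matrix.one_apply_ne hkl, cBL_orthogonal N1 N2 Nw Nb hN1 hN2 hwb hw1 hw2 k l
        (Nat.lt_succ_iff.mp k.2) (Nat.lt_succ_iff.mp l.2) (fun h => hkl (Fin.ext h)), mul_zero]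
  have hUV : U * V = 1 := mul_eq_one_comm.mp hVU
  have hTU : TBL N1 N2 Nw Nb * U = U * L := by
    ext i k
    rw [Matrix.mul_apply, Matrix.mul_diagonal]
    simp only [U]
    rw [TBL_mul_cBL N1 N2 Nw Nb hN1 hN2 hwb hw2 k (Nat.lt_succ_iff.mp k.2) i, mul_comm]
  have hpow : ∀ m : ℕ, TBL N1 N2 Nw Nb ^ m * U = U * L ^ m := by
    intro m
    induction m with
    | zero => simp
    | succ m ih => rw [pow_succ, mul_assoc, hTU, ← mul_assoc, ih, mul_assoc, ← pow_succ]
  have hfin : TBL N1 N2 Nw Nb ^ m = U * L ^ m * V := by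
    rw [← hpow, mul_assoc, hUV, mul_one]
  rw [hfin, Matrix.diagonal_pow, Matrix.mul_apply,
    ← Fin.sum_univ_eq_sum_range (fun k => cBL N1 N2 Nw k i
      * (lamBL N1 N2 (N1 + N2) k) ^ m * DeltaSqBL N1 N2 Nw (N1 + N2) k
        / piBL N1 Nw (N1 + N2) 0) (Nw + 1)]
  refine Finset.sum_congr rfl fun k _ => ?_
  rw [Matrix.mul_diagonal]
  simp only [U, V, Pi.pow_apply, Fin.val_zero, cBL_zero]
  ring

lemma DeltaSqBL_zero (N1 N2 Nw : ℕ) (hw1 : Nw ≤ N1) (hw2 : Nw ≤ N2) :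
    DeltaSqBL N1 N2 Nw (N1 + N2) 0 = piBL N1 Nw (N1 + N2) 0 ^ 2 := by
  have h0 := piBL_pos N1 N2 Nw 0 hw2 (Nat.zero_le _)
  have : ∑ i ∈ Finset.range (Nw + 1), (cBL N1 N2 Nw 0 i) ^ 2 / piBL N1 Nw (N1 + N2) i
      = (piBL N1 Nw (N1 + N2) 0 ^ 2)⁻¹ := by
    rw [← mul_one ((piBL N1 Nw (N1 + N2) 0 ^ 2)⁻¹), ← piBL_sum N1 N2 Nw hw1 hw2, Finset.mul_sum]
    refine Finset.sum_congr rfl fun i hi => ?_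
    have hi' : i ≤ Nw := Nat.lt_succ_iff.mp (Finset.mem_range.mp hi)
    have hp := piBL_pos N1 N2 Nw i hw2 hi'
    have he := piBL_eq_cBL N1 N2 Nw i hw1 hw2 hi'
    field_simp
    rw [he]; ring
  rw [DeltaSqBL, this, inv_inv]

/-- Exact total-variation formula:
`‖ρ_m(·|0) − π‖_V = (1/2) Σ_i |π_i Σ_{k=1}^{Nw} λ_k^m v_k(i) v_k(0)|`. -/
theorem BL_exact_total_variation
    (N1 N2 Nw Nb N : ℕ)
    (hN1 : 1 ≤ N1) (hN2 : 1 ≤ N2) (hN : N = N1 + N2) (hwb : Nw + Nb = N)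
    (hw1 : Nw ≤ N1) (hw2 : Nw ≤ N2)
    (m : ℕ) :
    (1 / 2) * ∑ i : Fin (Nw + 1),
        |((TBL N1 N2 Nw Nb) ^ m) i 0 - piBL N1 Nw N i|
      = (1 / 2) * ∑ i : Fin (Nw + 1),
          |piBL N1 Nw N i *
            ∑ k ∈ Finset.Icc 1 Nw,
              (lamBL N1 N2 N k) ^ m * vBL N1 N2 Nw N k i * vBL N1 N2 Nw N k 0| := by
  subst hN
  congr 1
  refine Finset.sum_congr rfl fun i _ => ?_
  congr 1
  have hi : (i : ℕ) ≤ Nw := Nat.lt_succ_iff.mp i.2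
  have hpi := piBL_pos N1 N2 Nw i hw2 hi
  have hp0 := piBL_pos N1 N2 Nw 0 hw2 (Nat.zero_le _)
  -- The `k = 0` term of the spectral decomposition is exactly `π_i`.
  have hlam : lamBL N1 N2 (N1 + N2) 0 = 1 := by simp [lamBL]
  rw [TBL_pow_apply N1 N2 Nw Nb hN1 hN2 hwb hw1 hw2 m i, Finset.sum_range_succ', hlam,
    DeltaSqBL_zero N1 N2 Nw hw1 hw2, piBL_eq_cBL N1 N2 Nw i hw1 hw2 hi, one_pow, mul_one,
    show cBL N1 N2 Nw 0 i * piBL N1 Nw (N1 + N2) 0 ^ 2 / piBL N1 Nw (N1 + N2) 0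
      = piBL N1 Nw (N1 + N2) 0 * cBL N1 N2 Nw 0 i by field_simp, add_sub_cancel_right,
    ← piBL_eq_cBL N1 N2 Nw i hw1 hw2 hi, Finset.mul_sum, Finset.range_eq_Ico,
    Finset.sum_Ico_add' (fun k => cBL N1 N2 Nw k i
      * (lamBL N1 N2 (N1 + N2) k) ^ m * DeltaSqBL N1 N2 Nw (N1 + N2) k
        / piBL N1 Nw (N1 + N2) 0) 0 Nw 1]
  refine Finset.sum_congr (by ext k; simp) fun k _ => ?_
  have hsq : DeltaBL N1 N2 Nw (N1 + N2) k * DeltaBL N1 N2 Nw (N1 + N2) k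
      = DeltaSqBL N1 N2 Nw (N1 + N2) k :=
    Real.mul_self_sqrt (inv_nonneg.mpr (normSq_pos N1 N2 Nw k hw2).le)
  simp only [vBL, cBL_zero]
  rw [← hsq]
  field_simp
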